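/- Let g be a positive integer, let (G,σ) be a connected g-wide signed graph, and let x,y be vertices of (G,σ) lying on a common negative cycle of length g with ad_{(G,σ)}(x,y) = p > 0. Then ad_{EDC(G,σ)}(x⁺,y⁺) = ad_{EDC(G,σ)}(x⁻,y⁻) = p. Moreover, if d_G(x,y) = ⌊g/2⌋, then ad_{EDC(G,σ)}(x⁺,y⁻) = ad_{EDC(G,σ)}(x⁻,y⁺) = g − p = ⌈g/2⌉; otherwise ad_{EDC(G,σ)}(x⁺,y⁻) = ad_{EDC(G,σ)}(x⁻,y⁺) = −p − 1. -/

import Mathlib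

open SimpleGraph

namespace SignedPaper

variable {V : Type*} {W : Type*}

/-- The product of the signs (values of `σ`) along the darts of a walk. -/
def walkSign {G : SimpleGraph V} (σ : V → V → ℤ) {a b : V} (w : G.Walk a b) : ℤ :=
  (w.darts.map fun d => σ d.toProd.1 d.toProd.2).prod

/-- The length of a walk in a weighted signed graph: the sum of the absolute
values of the weights of its edges, with multiplicity. -/
def walkWLen {G : SimpleGraph V} (ω : V → V → ℤ) {a b : V} (w : G.Walk a b) : ℕ :=
  (w.darts.map fun d => (ω d.toProd.1 d.toProd.2).natAbs).sum

/-- Walk-girth of type `ij` of a signed graph: the length of a shortest closed walk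
which is negative iff `neg` and of odd length iff `odd` (`⊤` if none exists). -/
noncomputable def sGirth (G : SimpleGraph V) (σ : V → V → ℤ) (neg odd : Bool) : ℕ∞ :=
  sInf {n : ℕ∞ | ∃ (a : V) (w : G.Walk a a), (w.length : ℕ∞) = n ∧
    (walkSign σ w < 0 ↔ neg = true) ∧ (Odd w.length ↔ odd = true)}

/-- Walk-girth of type `ij` of a weighted signed graph. -/
noncomputable def wGirth (G : SimpleGraph V) (ω : V → V → ℤ) (neg odd : Bool) : ℕ∞ :=
  sInf {n : ℕ∞ | ∃ (a : V) (w : G.Walk a a), (walkWLen ω w : ℕ∞) = n ∧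
    (walkSign ω w < 0 ↔ neg = true) ∧ (Odd (walkWLen ω w) ↔ odd = true)}

/-- A graph homomorphism is a homomorphism of signed graphs if it preserves
the signs of all closed walks. -/
def IsSignedHom {G : SimpleGraph V} {H : SimpleGraph W} (σ : V → V → ℤ) (π : W → W → ℤ)
    (f : G →g H) : Prop :=
  ∀ (a : V) (w : G.Walk a a), walkSign π (w.map f) = walkSign σ w

/-- A signed graph is `g`-wide if it has no positive closed walk of odd length, and
every negative closed walk has length at least `g` and of the same parity as `g`. -/
def gWide (G : SimpleGraph V) (σ : V → V → ℤ) (g : ℕ) : Prop :=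
  (∀ (a : V) (w : G.Walk a a), 0 < walkSign σ w → ¬ Odd w.length) ∧
  (∀ (a : V) (w : G.Walk a a), walkSign σ w < 0 → g ≤ w.length ∧ (Odd w.length ↔ Odd g))

open Classical in
/-- The algebraic distance between two vertices of a signed graph. -/
noncomputable def adist (G : SimpleGraph V) (σ : V → V → ℤ) (u v : V) : ℤ :=
  if ∃ w : G.Walk u v, w.IsPath ∧ w.length = G.dist u v ∧ 0 < walkSign σ w
  then (G.dist u v : ℤ) else -(G.dist u v : ℤ)

/-- The underlying graph of the Extended Double Cover of a signed graph:
`(v, true)` plays the role of `v⁺` and `(v, false)` of `v⁻`. -/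
def EDCsg (G : SimpleGraph V) (σ : V → V → ℤ) (hσ : ∀ u v, σ u v = σ v u) :
    SimpleGraph (V × Bool) where
  Adj x y := (x.1 = y.1 ∧ x.2 ≠ y.2) ∨ (G.Adj x.1 y.1 ∧ (x.2 = y.2 ↔ 0 < σ x.1 y.1))
  symm.symm := fun x y h => by
    rcases h with ⟨h1, h2⟩ | ⟨ha, hb⟩
    · exact Or.inl ⟨h1.symm, h2.symm⟩
    · refine Or.inr ⟨ha.symm, ?_⟩
      rw [hσ y.1 x.1, eq_comm]
      exact hb
  loopless.irrefl := fun x h => by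
    rcases h with ⟨-, h⟩ | ⟨h, -⟩
    · exact h rfl
    · exact G.loopless.irrefl _ h

open Classical in
/-- The signature of the Extended Double Cover: edges `v⁺v⁻` are negative,
all other edges are positive. -/
noncomputable def edcSign : V × Bool → V × Bool → ℤ := fun x y =>
  if x.1 = y.1 then -1 else 1

/-- The underlying graph of the Extended Double Cover of a weighted signed graph. -/
def EDCw (G : SimpleGraph V) : SimpleGraph (V × Bool) where
  Adj x y := (x.1 = y.1 ∧ x.2 ≠ y.2) ∨ G.Adj x.1 y.1
  symm.symm := fun x y h => by
    rcases h with ⟨h1, h2⟩ | h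
    · exact Or.inl ⟨h1.symm, h2.symm⟩
    · exact Or.inr h.symm
  loopless.irrefl := fun x h => by
    rcases h with ⟨-, h⟩ | h
    · exact h rfl
    · exact G.loopless.irrefl _ h

open Classical in
/-- The weights of the Extended Double Cover of a weighted signed graph `(G, ω)`. -/
noncomputable def EDCwWeight (ω : V → V → ℤ) : V × Bool → V × Bool → ℤ := fun x y =>
  if x.1 = y.1 then -1
  else if x.2 = y.2 then (if 0 < ω x.1 y.1 then ω x.1 y.1 else ω x.1 y.1 - 1)
  else (if 0 < ω x.1 y.1 then -(ω x.1 y.1 + 1) else -(ω x.1 y.1))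

/-- `G` has a `K₄`-minor: there are four disjoint nonempty connected branch sets,
pairwise joined by an edge. -/
def HasK4Minor (G : SimpleGraph V) : Prop :=
  ∃ S : Fin 4 → Set V,
    (∀ i, (G.induce (S i)).Connected) ∧
    (∀ i j, i ≠ j → Disjoint (S i) (S j)) ∧
    (∀ i j, i ≠ j → ∃ u ∈ S i, ∃ v ∈ S j, G.Adj u v)

/-- A signed graph `(B, π)` is SP-complete if every connected signed graph whose
underlying graph is finite and `K₄`-minor-free and which satisfies the conclusion of
the no-homomorphism lemma with respect to `(B, π)` admits a homomorphism to `(B, π)`. -/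
def SPComplete (B : SimpleGraph W) (π : W → W → ℤ) : Prop :=
  ∀ (V' : Type) (G : SimpleGraph V') (σ : V' → V' → ℤ),
    Finite V' → (∀ u v, σ u v = σ v u) →
    (∀ u v, G.Adj u v → σ u v = 1 ∨ σ u v = -1) →
    G.Connected → ¬ HasK4Minor G →
    (∀ neg odd : Bool, sGirth B π neg odd ≤ sGirth G σ neg odd) →
    ∃ f : G →g B, IsSignedHom σ π f

/-- The cylinder `C_{2a} □ P_b` on vertex set `{0,…,2a-1} × {0,…,b-1}`. -/
def cylT (a b : ℕ) : SimpleGraph (Fin (2 * a) × Fin b) where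
  Adj x y := (x.1 = y.1 ∧ ((x.2.val : ℤ) - (y.2.val : ℤ)).natAbs = 1) ∨
    (x.2 = y.2 ∧ (((x.1.val : ℤ) - (y.1.val : ℤ)).natAbs = 1 ∨
      ((x.1.val : ℤ) - (y.1.val : ℤ)).natAbs = 2 * a - 1))
  symm.symm := fun x y h => by
    rcases h with ⟨h1, h2⟩ | ⟨h1, h2 | h2⟩
    · exact Or.inl ⟨h1.symm, by omega⟩
    · exact Or.inr ⟨h1.symm, Or.inl (by omega)⟩
    · exact Or.inr ⟨h1.symm, Or.inr (by omega)⟩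
  loopless.irrefl := fun x h => by
    have hpos : 0 < 2 * a := x.1.pos
    rcases h with ⟨-, h⟩ | ⟨-, h | h⟩ <;> omega

/-- Two vertices of the cylinder are antipodal if `|Δi| + |Δj| = a + b - 1`. -/
def antip (a b : ℕ) (x y : Fin (2 * a) × Fin b) : Prop :=
  ((x.1.val : ℤ) - (y.1.val : ℤ)).natAbs + ((x.2.val : ℤ) - (y.2.val : ℤ)).natAbs = a + b - 1

/-- The twisted tube: the cylinder together with the antipodal edges `J`. -/
def twistedTube (a b : ℕ) : SimpleGraph (Fin (2 * a) × Fin b) where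
  Adj x y := (cylT a b).Adj x y ∨ (x ≠ y ∧ antip a b x y)
  symm.symm := fun x y h => by
    rcases h with h | ⟨hne, h⟩
    · exact Or.inl ((cylT a b).symm.symm _ _ h)
    · refine Or.inr ⟨hne.symm, ?_⟩
      unfold antip at h ⊢
      omega
  loopless.irrefl := fun x h => by
    rcases h with h | ⟨hne, -⟩
    · exact (cylT a b).loopless.irrefl x h
    · exact hne rfl

/-- The signature of the twisted tube: antipodal edges (the set `J`) are negative,
all other edges are positive. -/
def ttSign (a b : ℕ) (x y : Fin (2 * a) × Fin b) : ℤ :=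
  if ((x.1.val : ℤ) - (y.1.val : ℤ)).natAbs + ((x.2.val : ℤ) - (y.2.val : ℤ)).natAbs
      = a + b - 1 then -1 else 1

/-- The underlying graph of the signed projective cube `SPC(k)`: vertices are elements
of `ℤ₂^k`, adjacent if they differ in exactly one coordinate or in all coordinates. -/
def spcGraph (k : ℕ) : SimpleGraph (Fin k → ZMod 2) where
  Adj x y := x ≠ y ∧ (hammingDist x y = 1 ∨ hammingDist x y = k)
  symm.symm := fun x y h => ⟨h.1.symm, by rw [hammingDist_comm]; exact h.2⟩
  loopless.irrefl := fun x h => h.1 rfl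

/-- The signature of `SPC(k)`: an edge is negative iff its endpoints differ in
all coordinates. -/
def spcSign (k : ℕ) (x y : Fin k → ZMod 2) : ℤ :=
  if hammingDist x y = k then -1 else 1

lemma spcSign_symm (k : ℕ) : ∀ x y : Fin k → ZMod 2, spcSign k x y = spcSign k y x := by
  intro x y
  unfold spcSign
  rw [hammingDist_comm]

/-- The function `f_g`. -/
def fg (g : ℕ) (x : ℤ) : ℤ := if 0 < x then x else (g : ℤ) + x

/-- `(G, σ)` is (a realization of) the signed graph `T_g(p,q,r)`: three distinguished
vertices `x, y, z` joined by six internally disjoint paths of prescribed lengths and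
signs, whose edges exhaust `G`. -/
def IsTgpqr (G : SimpleGraph V) (σ : V → V → ℤ) (g : ℕ) (p q r : ℤ) : Prop :=
  ∃ (x y z : V) (P1 P2 : G.Walk x y) (Q1 Q2 : G.Walk y z) (R1 R2 : G.Walk z x),
    x ≠ y ∧ y ≠ z ∧ z ≠ x ∧
    P1.IsPath ∧ P2.IsPath ∧ Q1.IsPath ∧ Q2.IsPath ∧ R1.IsPath ∧ R2.IsPath ∧
    P1.length = p.natAbs ∧ P2.length = g - p.natAbs ∧
    Q1.length = q.natAbs ∧ Q2.length = g - q.natAbs ∧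
    R1.length = r.natAbs ∧ R2.length = g - r.natAbs ∧
    walkSign σ P1 = Int.sign p ∧ walkSign σ P2 = -Int.sign p ∧
    walkSign σ Q1 = Int.sign q ∧ walkSign σ Q2 = -Int.sign q ∧
    walkSign σ R1 = Int.sign r ∧ walkSign σ R2 = -Int.sign r ∧
    (∀ e ∈ G.edgeSet, e ∈ P1.edges ∨ e ∈ P2.edges ∨ e ∈ Q1.edges ∨ e ∈ Q2.edges ∨
      e ∈ R1.edges ∨ e ∈ R2.edges) ∧
    (∀ i j : Fin 6, i ≠ j → ∀ v : V,
      v ∈ (![{v | v ∈ P1.support}, {v | v ∈ P2.support}, {v | v ∈ Q1.support},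
            {v | v ∈ Q2.support}, {v | v ∈ R1.support}, {v | v ∈ R2.support}] : Fin 6 → Set V) i →
      v ∈ (![{v | v ∈ P1.support}, {v | v ∈ P2.support}, {v | v ∈ Q1.support},
            {v | v ∈ Q2.support}, {v | v ∈ R1.support}, {v | v ∈ R2.support}] : Fin 6 → Set V) j →
      v = x ∨ v = y ∨ v = z)


lemma walkSign_nil' {G : SimpleGraph V} (σ : V → V → ℤ) (a : V) :
    walkSign σ (Walk.nil : G.Walk a a) = 1 := by simp [walkSign]

lemma walkSign_cons' {G : SimpleGraph V} (σ : V → V → ℤ) {a b c : V} (h : G.Adj a b)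
    (w : G.Walk b c) : walkSign σ (Walk.cons h w) = σ a b * walkSign σ w := by
  simp [walkSign]

lemma walkSign_append' {G : SimpleGraph V} (σ : V → V → ℤ) {a b c : V} (w : G.Walk a b)
    (w' : G.Walk b c) : walkSign σ (w.append w') = walkSign σ w * walkSign σ w' := by
  simp [walkSign]

lemma walkSign_reverse' {G : SimpleGraph V} (σ : V → V → ℤ) (hs : ∀ u v, σ u v = σ v u)
    {a b : V} (w : G.Walk a b) : walkSign σ w.reverse = walkSign σ w := by
  induction w with
  | nil => rfl
  | cons h w ih =>
    rw [Walk.reverse_cons, walkSign_append', ih, walkSign_cons', walkSign_cons', walkSign_nil',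
      hs, mul_one, mul_comm]

lemma walkSign_pm {G : SimpleGraph V} (σ : V → V → ℤ)
    (hpm : ∀ u v, G.Adj u v → σ u v = 1 ∨ σ u v = -1)
    {a b : V} (w : G.Walk a b) : walkSign σ w = 1 ∨ walkSign σ w = -1 := by
  induction w with
  | nil => left; exact walkSign_nil' _ _
  | cons h w ih =>
    rw [walkSign_cons']
    rcases hpm _ _ h with h1 | h1 <;> rcases ih with h2 | h2 <;> simp [h1, h2]

lemma edc_proj {G : SimpleGraph V} (σ : V → V → ℤ) (hs : ∀ u v, σ u v = σ v u)
    (hpm : ∀ u v, G.Adj u v → σ u v = 1 ∨ σ u v = -1)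
    {a b : V × Bool} (w : (EDCsg G σ hs).Walk a b) :
    ∃ w' : G.Walk a.1 b.1,
      (walkSign edcSign w = 1 ∧ w'.length ≤ w.length ∧ (walkSign σ w' = 1 ↔ a.2 = b.2)) ∨
      (walkSign edcSign w = -1 ∧ w'.length + 1 ≤ w.length ∧ (walkSign σ w' = 1 ↔ a.2 ≠ b.2)) := by
  induction w with
  | nil => exact ⟨Walk.nil, Or.inl ⟨walkSign_nil' _ _, by simp, by simp [walkSign_nil']⟩⟩
  | @cons a c b h w ih =>
    obtain ⟨w', ih⟩ := ih
    obtain ⟨a1, a2⟩ := a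
    obtain ⟨c1, c2⟩ := c
    obtain ⟨b1, b2⟩ := b
    rw [walkSign_cons', Walk.length_cons]
    rcases h with ⟨h1, h2⟩ | ⟨h1, h2⟩
    · dsimp only at h1 h2 ih w' ⊢
      subst h1
      refine ⟨w', ?_⟩
      have hE : edcSign (a1, a2) (a1, c2) = -1 := by simp [edcSign]
      rw [hE]
      have hB : a2 = !c2 := by cases a2 <;> cases c2 <;> simp_all
      subst hB
      rcases ih with ⟨i1, i2, i3⟩ | ⟨i1, i2, i3⟩
      · right
        refine ⟨by rw [i1]; rfl, by omega, ?_⟩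
        rw [i3]; cases c2 <;> cases b2 <;> simp
      · left
        refine ⟨by rw [i1]; rfl, by omega, ?_⟩
        rw [i3]; cases c2 <;> cases b2 <;> simp
    · dsimp only at h1 h2 ih w' ⊢
      refine ⟨Walk.cons h1 w', ?_⟩
      have hE : edcSign (a1, a2) (c1, c2) = 1 := by simp [edcSign, h1.ne]
      rw [hE, Walk.length_cons, walkSign_cons', one_mul]
      have hw := walkSign_pm σ hpm w'
      rcases ih with ⟨i1, i2, i3⟩ | ⟨i1, i2, i3⟩
      · left
        refine ⟨i1, by omega, ?_⟩
        rcases hpm _ _ h1 with q | q <;> rcases hw with r | r <;> rw [q] at h2 ⊢ <;>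
          rw [r] at i3 ⊢ <;> revert h2 i3 <;> cases a2 <;> cases c2 <;> cases b2 <;> simp
      · right
        refine ⟨i1, by omega, ?_⟩
        rcases hpm _ _ h1 with q | q <;> rcases hw with r | r <;> rw [q] at h2 ⊢ <;>
          rw [r] at i3 ⊢ <;> revert h2 i3 <;> cases a2 <;> cases c2 <;> cases b2 <;> simp

lemma edc_lift {G : SimpleGraph V} (σ : V → V → ℤ) (hs : ∀ u v, σ u v = σ v u)
    (hpm : ∀ u v, G.Adj u v → σ u v = 1 ∨ σ u v = -1)
    {u v : V} (w : G.Walk u v) : ∀ a b : Bool, (a = b ↔ walkSign σ w = 1) →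
    ∃ w' : (EDCsg G σ hs).Walk (u, a) (v, b),
      w'.length = w.length ∧ walkSign edcSign w' = 1 := by
  induction w with
  | nil =>
    intro a b h
    have : a = b := h.2 (walkSign_nil' _ _)
    subst this
    exact ⟨Walk.nil, rfl, walkSign_nil' _ _⟩
  | @cons u c v h w ih =>
    intro a b hab
    rw [walkSign_cons'] at hab
    have hw := walkSign_pm σ hpm w
    have key : ∃ d : Bool, (a = d ↔ 0 < σ u c) ∧ (d = b ↔ walkSign σ w = 1) := by
      rcases hpm _ _ h with q | q <;> rcases hw with r | r <;> rw [q, r] at hab <;> rw [q, r] <;>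
        revert hab <;> cases a <;> cases b <;> simp
    obtain ⟨d, hd1, hd2⟩ := key
    obtain ⟨w', h1, h2⟩ := ih d b hd2
    have hA : (EDCsg G σ hs).Adj (u, a) (c, d) := Or.inr ⟨h, hd1⟩
    refine ⟨Walk.cons hA w', by simp [h1], ?_⟩
    rw [walkSign_cons', h2]
    simp [edcSign, h.ne]

lemma adist_eq_pos {G : SimpleGraph V} (σ : V → V → ℤ) {u v : V} (n : ℕ) (w : G.Walk u v)
    (hw : w.length = n) (hs : walkSign σ w = 1) (hmin : ∀ w' : G.Walk u v, n ≤ w'.length) :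
    adist G σ u v = n := by
  have hd : G.dist u v = n := by
    obtain ⟨w', hw'⟩ := w.reachable.exists_walk_length_eq_dist
    have h1 := hmin w'
    have h2 := G.dist_le w
    omega
  unfold adist
  rw [if_pos, hd]
  exact ⟨w, w.isPath_of_length_eq_dist (by omega), by omega, by omega⟩

lemma adist_eq_neg {G : SimpleGraph V} (σ : V → V → ℤ) {u v : V} (n : ℕ) (w : G.Walk u v)
    (hw : w.length = n) (hmin : ∀ w' : G.Walk u v, n ≤ w'.length)
    (hs : ∀ w' : G.Walk u v, 0 < walkSign σ w' → n < w'.length) :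
    adist G σ u v = -(n : ℤ) := by
  have hd : G.dist u v = n := by
    obtain ⟨w', hw'⟩ := w.reachable.exists_walk_length_eq_dist
    have h1 := hmin w'
    have h2 := G.dist_le w
    omega
  unfold adist
  rw [if_neg, hd]
  rintro ⟨w', -, h1, h2⟩
  have := hs w' h2
  omega

/-- algebraic distances in the Extended Double Cover, for vertices
`x, y` on a common negative cycle of length `g` with `ad_{(G,σ)}(x,y) = p > 0`. -/
theorem adist_EDC_pos {V : Type*} [Fintype V]
    (G : SimpleGraph V) (σ : V → V → ℤ)
    (hsymm : ∀ u v, σ u v = σ v u) (hpm : ∀ u v, G.Adj u v → σ u v = 1 ∨ σ u v = -1)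
    (g : ℕ) (hg : 0 < g) (hconn : G.Connected) (hwide : gWide G σ g)
    (x y : V) (C : G.Walk x x) (hC : C.IsCycle) (hlen : C.length = g)
    (hy : y ∈ C.support) (hneg : walkSign σ C = -1)
    (p : ℤ) (hp : adist G σ x y = p) (hppos : 0 < p) :
    adist (EDCsg G σ hsymm) edcSign (x, true) (y, true) = p ∧
    adist (EDCsg G σ hsymm) edcSign (x, false) (y, false) = p ∧
    (G.dist x y = g / 2 →
      adist (EDCsg G σ hsymm) edcSign (x, true) (y, false) = (g : ℤ) - p ∧
      adist (EDCsg G σ hsymm) edcSign (x, false) (y, true) = (g : ℤ) - p ∧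
      (g : ℤ) - p = (((g + 1) / 2 : ℕ) : ℤ)) ∧
    (G.dist x y ≠ g / 2 →
      adist (EDCsg G σ hsymm) edcSign (x, true) (y, false) = -p - 1 ∧
      adist (EDCsg G σ hsymm) edcSign (x, false) (y, true) = -p - 1) := by
  classical
  have hP : ∃ P : G.Walk x y, P.length = G.dist x y ∧ walkSign σ P = 1 ∧ p = (G.dist x y : ℤ) := by
    unfold adist at hp
    split_ifs at hp with h
    · obtain ⟨P, -, h1, h2⟩ := h
      refine ⟨P, h1, ?_, hp.symm⟩
      rcases walkSign_pm σ hpm P with h | h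
      · exact h
      · omega
    · omega
  obtain ⟨P, hPl, hPs, hpd⟩ := hP
  have hnegw : ∀ w : G.Walk x y, walkSign σ w = -1 → g ≤ w.length + G.dist x y := by
    intro w hw
    have := (hwide.2 x (w.append P.reverse) (by
      rw [walkSign_append', walkSign_reverse' σ hsymm, hw, hPs]; norm_num)).1
    rw [Walk.length_append, Walk.length_reverse] at this
    omega
  have hN : ∃ N : G.Walk x y, walkSign σ N = -1 ∧ N.length + G.dist x y = g := by
    have e1 : walkSign σ (C.takeUntil y hy) * walkSign σ (C.dropUntil y hy).reverse = -1 := by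
      rw [walkSign_reverse' σ hsymm, ← walkSign_append', Walk.take_spec, hneg]
    have e2 : (C.takeUntil y hy).length + (C.dropUntil y hy).reverse.length = g := by
      rw [Walk.length_reverse, ← Walk.length_append, Walk.take_spec, hlen]
    generalize C.takeUntil y hy = A at e1 e2
    generalize (C.dropUntil y hy).reverse = B at e1 e2
    have dA := G.dist_le A
    have dB := G.dist_le B
    rcases walkSign_pm σ hpm A with h | h
    · have hB : walkSign σ B = -1 := by rw [h] at e1; omega
      have := hnegw B hB
      exact ⟨B, hB, by omega⟩
    · have := hnegw A h
      exact ⟨A, h, by omega⟩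
  obtain ⟨N, hNs, hNl⟩ := hN
  have hNd := G.dist_le N
  have same : ∀ a, adist (EDCsg G σ hsymm) edcSign (x, a) (y, a) = p := by
    intro a
    obtain ⟨w, h1, h2⟩ := edc_lift σ hsymm hpm P a a (by simp [hPs])
    rw [hpd]
    refine adist_eq_pos _ _ w (h1.trans hPl) h2 ?_
    intro w'
    obtain ⟨q, hq⟩ := edc_proj σ hsymm hpm w'
    have : G.dist x y ≤ q.length := G.dist_le q
    rcases hq with hq | hq <;> omega
  have bound : ∀ a b, a ≠ b → ∀ w : (EDCsg G σ hsymm).Walk (x, a) (y, b),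
      (walkSign edcSign w = 1 ∧ g ≤ w.length + G.dist x y) ∨
      (walkSign edcSign w = -1 ∧ G.dist x y + 1 ≤ w.length) := by
    intro a b hab w
    obtain ⟨q, hq⟩ := edc_proj σ hsymm hpm w
    have hd : G.dist x y ≤ q.length := G.dist_le q
    rcases hq with ⟨h1, h2, h3⟩ | ⟨h1, h2, h3⟩
    · left
      refine ⟨h1, ?_⟩
      have hq1 : walkSign σ q = -1 := by
        rcases walkSign_pm σ hpm q with h | h
        · exact absurd (h3.1 h) hab
        · exact h
      have := hnegw q hq1
      omega
    · right
      exact ⟨h1, by omega⟩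
  have opp1 : G.dist x y = g / 2 → ∀ a b, a ≠ b →
      adist (EDCsg G σ hsymm) edcSign (x, a) (y, b) = (g : ℤ) - p := by
    intro hd a b hab
    obtain ⟨w, h1, h2⟩ := edc_lift σ hsymm hpm N a b (by simp [hNs, hab])
    rw [adist_eq_pos edcSign N.length w h1 h2]
    · omega
    · intro w'
      rcases bound a b hab w' with h | h <;> omega
  have opp2 : G.dist x y ≠ g / 2 → ∀ a b, a ≠ b →
      adist (EDCsg G σ hsymm) edcSign (x, a) (y, b) = -p - 1 := by
    intro hd a b hab
    obtain ⟨w, h1, h2⟩ := edc_lift σ hsymm hpm P a a (by simp [hPs])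
    have hA : (EDCsg G σ hsymm).Adj (y, a) (y, b) := Or.inl ⟨rfl, hab⟩
    rw [adist_eq_neg edcSign (G.dist x y + 1) (w.concat hA) (by
      rw [Walk.length_concat]; omega)]
    · push_cast; omega
    · intro w'
      rcases bound a b hab w' with h | h <;> omega
    · intro w' hw'
      rcases bound a b hab w' with h | h <;> omega
  refine ⟨same _, same _, fun h => ⟨opp1 h _ _ (by simp), opp1 h _ _ (by simp), ?_⟩,
    fun h => ⟨opp2 h _ _ (by simp), opp2 h _ _ (by simp)⟩⟩
  omega

end SignedPaper
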